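/- Let G be a P4-sparse graph and let A be a set of four vertices inducing a P4 in G. Then there do not exist distinct vertices u, v in P(A) and a vertex x in T(A) such that x is adjacent to neither u nor v. -/

import Mathlib

open SimpleGraph

variable {V : Type*}

/-- `a, b, c, d` form an induced path on four vertices (a `P4`) in `G`. -/
def IsP4 (G : SimpleGraph V) (a b c d : V) : Prop :=
  a ≠ b ∧ a ≠ c ∧ a ≠ d ∧ b ≠ c ∧ b ≠ d ∧ c ≠ d ∧
    G.Adj a b ∧ G.Adj b c ∧ G.Adj c d ∧ ¬G.Adj a c ∧ ¬G.Adj a d ∧ ¬G.Adj b d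

/-- A graph is a cograph if it contains no induced `P4`. -/
def IsCograph (G : SimpleGraph V) : Prop :=
  ∀ a b c d : V, ¬IsP4 G a b c d

/-- The vertex set `A` induces a `P4` in `G`. -/
def InducesP4 (G : SimpleGraph V) (A : Set V) : Prop :=
  ∃ a b c d : V, IsP4 G a b c d ∧ A = {a, b, c, d}

/-- `G` is `P4`-sparse: every set of five vertices induces at most one `P4`. -/
def P4Sparse (G : SimpleGraph V) : Prop :=
  ∀ s : Set V, s.ncard = 5 →
    ∀ A B : Set V, A ⊆ s → B ⊆ s → InducesP4 G A → InducesP4 G B → A = B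

/-- `F` is a deletion set of `G`: a set of edges of `G` whose removal yields a cograph. -/
def IsDeletionSet (G : SimpleGraph V) (F : Set (Sym2 V)) : Prop :=
  F ⊆ G.edgeSet ∧ IsCograph (G.deleteEdges F)

/-- The minimum size of a deletion set of `G`. -/
noncomputable def cographAlpha (G : SimpleGraph V) : ℕ :=
  sInf {n | ∃ F : Set (Sym2 V), IsDeletionSet G F ∧ F.ncard = n}

/-- `T(A)`: the vertices outside `A` adjacent to all vertices of `A`. -/
def tSet (G : SimpleGraph V) (A : Set V) : Set V :=
  {v | v ∉ A ∧ ∀ a ∈ A, G.Adj v a}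

/-- `I(A)`: the vertices outside `A` adjacent to no vertex of `A`. -/
def iSet (G : SimpleGraph V) (A : Set V) : Set V :=
  {v | v ∉ A ∧ ∀ a ∈ A, ¬G.Adj v a}

/-- `P(A)`: the vertices `v` outside `A` with `1 ≤ |N(v) ∩ A| ≤ 3`. -/
def pSet (G : SimpleGraph V) (A : Set V) : Set V :=
  {v | v ∉ A ∧ 1 ≤ (G.neighborSet v ∩ A).ncard ∧ (G.neighborSet v ∩ A).ncard ≤ 3}

/-!
In a `P4`-sparse graph, a vertex outside an induced path `a b c d` that is adjacent to an end of the
path is adjacent to all of it, since any other pattern of adjacencies gives a second `P4` on the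
same five vertices. It follows that a vertex of `P(A)` is adjacent to exactly `b` and `c`.
If `x ∈ T(A)` were adjacent to neither `u` nor `v`, then `a x c u` and `a x c v` would be two
induced `P4`s on the five vertices `a, x, c, u, v`.
-/

section

variable {G : SimpleGraph V} {A B : Set V} {a b c d p q r s u : V}

lemma isP4_iff_adj :
    IsP4 G a b c d ↔
      G.Adj a b ∧ G.Adj b c ∧ G.Adj c d ∧ ¬G.Adj a c ∧ ¬G.Adj a d ∧ ¬G.Adj b d := by
  refine ⟨fun ⟨_, _, _, _, _, _, hadj⟩ ↦ hadj, fun hadj ↦ ?_⟩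
  have ⟨hab, hbc, hcd, _, had, hbd⟩ := hadj
  have hac_ne : a ≠ c := by rintro rfl; exact had hcd
  have had_ne : a ≠ d := by rintro rfl; exact hbd hab.symm
  have hbd_ne : b ≠ d := by rintro rfl; exact had hab
  exact ⟨hab.ne, hac_ne, had_ne, hbc.ne, hbd_ne, hcd.ne, hadj⟩

lemma IsP4.reverse (h : IsP4 G a b c d) : IsP4 G d c b a := by
  simpa only [isP4_iff_adj, G.adj_comm, and_assoc, and_comm, and_left_comm] using h

lemma InducesP4.ncard_eq_four (hA : InducesP4 G A) : A.ncard = 4 := by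
  obtain ⟨a, b, c, d, ⟨hab, hac, had, hbc, hbd, hcd, -⟩, rfl⟩ := hA
  exact Set.ncard_eq_four.mpr ⟨a, b, c, d, hab, hac, had, hbc, hbd, hcd, rfl⟩

lemma IsP4.inducesP4 (h : IsP4 G a b c d) : InducesP4 G {a, b, c, d} :=
  ⟨a, b, c, d, h, rfl⟩

lemma exists_adj_of_mem_pSet (hu : u ∈ pSet G A) : ∃ w ∈ A, G.Adj u w := by
  obtain ⟨w, huw, hwA⟩ := Set.nonempty_of_ncard_ne_zero (Nat.one_le_iff_ne_zero.mp hu.2.1)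
  exact ⟨w, hwA, huw⟩

lemma notMem_tSet_of_mem_pSet (hA : 3 < A.ncard) (hu : u ∈ pSet G A) : u ∉ tSet G A := by
  intro huT
  have hinter : G.neighborSet u ∩ A = A := Set.inter_eq_right.mpr huT.2
  exact hA.not_ge (hinter ▸ hu.2.2)

namespace P4Sparse

lemma eq_of_subset_insert (hG : P4Sparse G) (hA : InducesP4 G A) (hB : InducesP4 G B)
    (hBA : B ⊆ insert u A) : B = A := by
  have hfin : A.Finite := Set.finite_of_ncard_pos (by simp [hA.ncard_eq_four])
  by_cases hu : u ∈ A
  · rw [Set.insert_eq_of_mem hu] at hBA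
    exact Set.eq_of_subset_of_ncard_le hBA (by rw [hA.ncard_eq_four, hB.ncard_eq_four]) hfin
  · have hcard : (insert u A).ncard = 5 := by
      rw [Set.ncard_insert_of_notMem hu hfin, hA.ncard_eq_four]
    exact hG _ hcard _ _ hBA (Set.subset_insert u A) hB hA

lemma not_isP4_of_subset_insert (hG : P4Sparse G) (hA : InducesP4 G A) (hu : u ∉ A)
    (hmem : u ∈ ({p, q, r, s} : Set V)) (hsub : {p, q, r, s} ⊆ insert u A) :
    ¬IsP4 G p q r s :=
  fun h ↦ hu (hG.eq_of_subset_insert hA h.inducesP4 hsub ▸ hmem)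

lemma adj_third_of_adj_first (hG : P4Sparse G) (h : IsP4 G a b c d)
    (hu : u ∉ ({a, b, c, d} : Set V)) (hua : G.Adj u a) : G.Adj u c := by
  by_contra huc
  obtain ⟨hab, hbc, hcd, hac, had, hbd⟩ := isP4_iff_adj.mp h
  by_cases hud : G.Adj u d
  · refine hG.not_isP4_of_subset_insert (p := a) (q := u) (r := d) (s := c)
      h.inducesP4 hu (by simp) (by grind) ?_
    exact isP4_iff_adj.mpr ⟨hua.symm, hud, hcd.symm, had, hac, huc⟩
  by_cases hub : G.Adj u b
  · refine hG.not_isP4_of_subset_insert (p := u) (q := b) (r := c) (s := d)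
      h.inducesP4 hu (by simp) (by grind) ?_
    exact isP4_iff_adj.mpr ⟨hub, hbc, hcd, huc, hud, hbd⟩
  · refine hG.not_isP4_of_subset_insert (p := u) (q := a) (r := b) (s := c)
      h.inducesP4 hu (by simp) (by grind) ?_
    exact isP4_iff_adj.mpr ⟨hua, hab, hbc, hub, huc, hac⟩

lemma adj_fourth_of_adj_first (hG : P4Sparse G) (h : IsP4 G a b c d)
    (hu : u ∉ ({a, b, c, d} : Set V)) (hua : G.Adj u a) : G.Adj u d := by
  by_contra hud
  have huc : G.Adj u c := hG.adj_third_of_adj_first h hu hua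
  obtain ⟨-, -, hcd, hac, had, -⟩ := isP4_iff_adj.mp h
  refine hG.not_isP4_of_subset_insert (p := a) (q := u) (r := c) (s := d)
    h.inducesP4 hu (by simp) (by grind) ?_
  exact isP4_iff_adj.mpr ⟨hua.symm, huc, hcd, hac, had, hud⟩

lemma mem_tSet_of_adj_first (hG : P4Sparse G) (h : IsP4 G a b c d)
    (hu : u ∉ ({a, b, c, d} : Set V)) (hua : G.Adj u a) : u ∈ tSet G {a, b, c, d} := by
  have huc : G.Adj u c := hG.adj_third_of_adj_first h hu hua
  have hud : G.Adj u d := hG.adj_fourth_of_adj_first h hu hua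
  have hub : G.Adj u b := hG.adj_third_of_adj_first h.reverse (by grind) hud
  refine ⟨hu, ?_⟩
  rintro w (rfl | rfl | rfl | rfl) <;> assumption

lemma not_adj_first_of_mem_pSet (hG : P4Sparse G) (h : IsP4 G a b c d)
    (hu : u ∈ pSet G {a, b, c, d}) : ¬G.Adj u a := fun hua ↦
  notMem_tSet_of_mem_pSet (by simp [h.inducesP4.ncard_eq_four]) hu
    (hG.mem_tSet_of_adj_first h hu.1 hua)

lemma adj_third_of_mem_pSet (hG : P4Sparse G) (h : IsP4 G a b c d)
    (hu : u ∈ pSet G {a, b, c, d}) : G.Adj u c := by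
  have hrev : ({d, c, b, a} : Set V) = {a, b, c, d} := by grind
  have hua : ¬G.Adj u a := hG.not_adj_first_of_mem_pSet h hu
  have hud : ¬G.Adj u d := hG.not_adj_first_of_mem_pSet h.reverse (hrev ▸ hu)
  by_contra huc
  have hub : G.Adj u b := by
    obtain ⟨w, rfl | rfl | rfl | rfl, huw⟩ := exists_adj_of_mem_pSet hu <;> trivial
  obtain ⟨-, hbc, hcd, -, -, hbd⟩ := isP4_iff_adj.mp h
  refine hG.not_isP4_of_subset_insert (p := u) (q := b) (r := c) (s := d)
    h.inducesP4 hu.1 (by simp) (by grind) ?_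
  exact isP4_iff_adj.mpr ⟨hub, hbc, hcd, huc, hud, hbd⟩

lemma isP4_of_mem_pSet_of_mem_tSet (hG : P4Sparse G) (h : IsP4 G a b c d) {x : V}
    (hu : u ∈ pSet G {a, b, c, d}) (hx : x ∈ tSet G {a, b, c, d}) (hxu : ¬G.Adj x u) :
    IsP4 G a x c u := by
  have hua : ¬G.Adj u a := hG.not_adj_first_of_mem_pSet h hu
  have huc : G.Adj u c := hG.adj_third_of_mem_pSet h hu
  have hxa : G.Adj x a := hx.2 a (by simp)
  have hxc : G.Adj x c := hx.2 c (by simp)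
  obtain ⟨-, -, -, hac, -, -⟩ := isP4_iff_adj.mp h
  exact isP4_iff_adj.mpr ⟨hxa.symm, hxc, huc.symm, hac, fun hau ↦ hua hau.symm, hxu⟩

end P4Sparse

end

/-- **Observation 2.7.** If `G` is `P4`-sparse and `A` induces a `P4`, then
there are no distinct `u, v ∈ P(A)` and `x ∈ T(A)` such that `x` is adjacent to neither `u`
nor `v`. -/
theorem p4Sparse_obs_2_7 (G : SimpleGraph V) (hG : P4Sparse G)
    (a b c d : V) (hP4 : IsP4 G a b c d) (A : Set V) (hA : A = {a, b, c, d}) :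
    ¬∃ u v x : V, u ≠ v ∧ u ∈ pSet G A ∧ v ∈ pSet G A ∧ x ∈ tSet G A ∧
      ¬G.Adj x u ∧ ¬G.Adj x v := by
  subst hA
  rintro ⟨u, v, x, huv, hu, hv, hx, hxu, hxv⟩
  have haxcu : IsP4 G a x c u := hG.isP4_of_mem_pSet_of_mem_tSet hP4 hu hx hxu
  have haxcv : IsP4 G a x c v := hG.isP4_of_mem_pSet_of_mem_tSet hP4 hv hx hxv
  have hv_notMem : v ∉ ({a, x, c, u} : Set V) := by
    obtain ⟨-, -, hav, -, hxv_ne, hcv, -⟩ := haxcv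
    simp [hav.symm, hxv_ne.symm, hcv.symm, huv.symm]
  exact hG.not_isP4_of_subset_insert haxcu.inducesP4 hv_notMem (by simp) (by grind) haxcv
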